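/- Let A be a Noetherian integral domain satisfying Serre's condition (S₂), and assume either that A contains an infinite field or that ht M ≥ 2 for every maximal ideal M of A. Then A is a weakly Arf ring if and only if the polynomial ring A[X₁, X₂, …, X_n] is a weakly Arf ring for every n ≥ 1. -/

import Mathlib

open scoped TensorProduct

/-- `A` is a *weakly Arf ring*: whenever `x, y, z ∈ A` with `x` a non-zerodivisor on `A`
and the fractions `y/x` and `z/x` in the total ring of fractions `Q(A)` are integral
over `A`, then `y * z ∈ x A`. -/
def IsWeaklyArfRing (A : Type*) [CommRing A] : Prop :=
  ∀ (x y z : A) (hx : x ∈ nonZeroDivisors A),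
    IsIntegral A (IsLocalization.mk' (FractionRing A) y
      (⟨x, hx⟩ : nonZeroDivisors A)) →
    IsIntegral A (IsLocalization.mk' (FractionRing A) z
      (⟨x, hx⟩ : nonZeroDivisors A)) →
    y * z ∈ Ideal.span {x}

/-- `xs` is a regular sequence on `R`: for each `i`, the element `xs i` acts injectively
on `R / (xs 0, …, xs (i-1))`. -/
def IsRegularSeq (R : Type*) [CommRing R] (xs : List R) : Prop :=
  ∀ (i : ℕ) (h : i < xs.length),
    IsSMulRegular (R ⧸ Ideal.span {y : R | y ∈ xs.take i}) (xs.get ⟨i, h⟩)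

/-- For a Noetherian local ring `R`, `depth R ≥ n` holds iff there is a regular sequence
of length `n` consisting of elements of the maximal ideal. -/
def RingDepthGE (R : Type*) [CommRing R] [IsLocalRing R] (n : ℕ) : Prop :=
  ∃ xs : List R, xs.length = n ∧ (∀ x ∈ xs, x ∈ IsLocalRing.maximalIdeal R) ∧
    IsRegularSeq R xs

/-- Serre's condition `(S_n)`: `depth A_P ≥ min (n, dim A_P)` for every prime ideal `P`
of `A`. -/
def SerreSCondition (A : Type*) [CommRing A] (n : ℕ) : Prop :=
  ∀ (P : Ideal A) [P.IsPrime], ∀ k : ℕ, k ≤ n →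
    (k : WithBot (WithTop ℕ)) ≤ ringKrullDim (Localization.AtPrime P) →
    RingDepthGE (Localization.AtPrime P) k

open Polynomial in
/-- `y` satisfies a homogenized monic equation with respect to `x`. -/
def IntOver {A : Type*} [CommRing A] (x y : A) : Prop :=
  ∃ p : A[X], p.Monic ∧ (p.scaleRoots x).eval y = 0

def WArf (A : Type*) [CommRing A] : Prop :=
  ∀ x y z : A, x ≠ 0 → IntOver x y → IntOver x z → x ∣ y * z

def UnitDiffs (A : Type*) [CommRing A] : Prop :=
  ∃ u : ℕ → A, ∀ i j, i ≠ j → IsUnit (u i - u j)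

theorem IntOver.map {A B : Type*} [CommRing A] [CommRing B] {x y : A} (h : IntOver x y)
    (φ : A →+* B) : IntOver (φ x) (φ y) := by
  obtain ⟨p, hp, he⟩ := h
  rcases subsingleton_or_nontrivial B with hB | hB
  · exact ⟨1, Polynomial.monic_one, Subsingleton.elim _ _⟩
  refine ⟨p.map φ, hp.map φ, ?_⟩
  rw [← Polynomial.map_scaleRoots _ _ _ (by simp [hp.leadingCoeff]), Polynomial.eval_map_apply,
    he, map_zero]

theorem intOver_iff {A K : Type*} [CommRing A] [Field K] [Algebra A K]
    (hinj : Function.Injective (algebraMap A K)) {x y : A} (hx : x ≠ 0) :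
    IntOver x y ↔ IsIntegral A (algebraMap A K y / algebraMap A K x) := by
  have hx' : algebraMap A K x ≠ 0 := by
    rwa [Ne, map_eq_zero_iff _ hinj]
  have key : ∀ p : Polynomial A, algebraMap A K ((p.scaleRoots x).eval y) =
      algebraMap A K x ^ p.natDegree *
        p.eval₂ (algebraMap A K) (algebraMap A K y / algebraMap A K x) := by
    intro p
    rw [← Polynomial.scaleRoots_eval₂_mul, mul_div_cancel₀ _ hx', Polynomial.eval₂_at_apply]
  constructor
  · rintro ⟨p, hp, he⟩
    refine ⟨p, hp, ?_⟩
    have := key p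
    rw [he, map_zero] at this
    exact (mul_eq_zero.1 this.symm).resolve_left (pow_ne_zero _ hx')
  · rintro ⟨p, hp, he⟩
    refine ⟨p, hp, hinj ?_⟩
    rw [key, he, mul_zero, map_zero]

theorem isWeaklyArfRing_iff (A : Type*) [CommRing A] [IsDomain A] :
    IsWeaklyArfRing A ↔ WArf A := by
  have hinj := IsFractionRing.injective A (FractionRing A)
  constructor
  · intro h x y z hx hy hz
    have := h x y z (mem_nonZeroDivisors_of_ne_zero hx)
    rw [IsFractionRing.mk'_eq_div, IsFractionRing.mk'_eq_div] at this
    exact Ideal.mem_span_singleton.1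
      (this ((intOver_iff hinj hx).1 hy) ((intOver_iff hinj hx).1 hz))
  · intro h x y z hx hy hz
    have hx0 := nonZeroDivisors.ne_zero hx
    rw [IsFractionRing.mk'_eq_div] at hy hz
    exact Ideal.mem_span_singleton.2
      (h x y z hx0 ((intOver_iff hinj hx0).2 hy) ((intOver_iff hinj hx0).2 hz))

theorem WArf.equiv {A B : Type*} [CommRing A] [CommRing B] (e : A ≃+* B) (h : WArf A) :
    WArf B := by
  intro x y z hx hy hz
  have := h (e.symm x) (e.symm y) (e.symm z) (by simpa using hx)
    (hy.map e.symm.toRingHom) (hz.map e.symm.toRingHom)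
  simpa using map_dvd e this

theorem IntOver.dvd {A : Type*} [CommRing A] [IsDomain A] [IsIntegrallyClosed A] {x y : A}
    (h : IntOver x y) (hx : x ≠ 0) : x ∣ y := by
  have hinj := IsFractionRing.injective A (FractionRing A)
  obtain ⟨c, hc⟩ := IsIntegrallyClosed.isIntegral_iff.1
    ((intOver_iff (K := FractionRing A) hinj hx).1 h)
  refine ⟨c, hinj ?_⟩
  have hx' : algebraMap A (FractionRing A) x ≠ 0 := by rwa [Ne, map_eq_zero_iff _ hinj]
  rw [map_mul, hc, mul_div_cancel₀ _ hx']

open Polynomial in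
theorem lagrange_lift {A K : Type*} [CommRing A] [Field K] [Algebra A K]
    (s : Finset ℕ) (u : ℕ → A) (hinj : Function.Injective (algebraMap A K))
    (hu : ∀ i j, i ≠ j → IsUnit (u i - u j)) (q : K[X]) (hq : q.natDegree < s.card)
    (hv : ∀ i ∈ s, ∃ a, q.eval (algebraMap A K (u i)) = algebraMap A K a) :
    ∃ r : A[X], r.map (algebraMap A K) = q := by
  classical
  have := hinj
  have hui : Function.Injective (fun i => algebraMap A K (u i)) := by
    intro i j hij
    by_contra hne
    have h0 : algebraMap A K (u i - u j) = 0 := by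
      rw [map_sub]; exact sub_eq_zero.2 hij
    exact ((hu i j hne).map (algebraMap A K)).ne_zero h0
  have hdeg : q.degree < s.card := by
    refine lt_of_le_of_lt degree_le_natDegree ?_
    exact_mod_cast hq
  rw [Lagrange.eq_interpolate (s := s) (v := fun i => algebraMap A K (u i)) hui.injOn hdeg]
  change _ ∈ (mapRingHom (algebraMap A K)).range
  rw [Lagrange.interpolate_apply]
  refine sum_mem fun i hi => mul_mem ?_ ?_
  · obtain ⟨a, ha⟩ := hv i hi
    exact ⟨C a, by simp [ha]⟩
  · refine prod_mem fun j hj => ?_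
    have hij : i ≠ j := (Finset.ne_of_mem_erase hj).symm
    obtain ⟨w, hw⟩ := hu i j hij
    refine ⟨C (↑w⁻¹ : A) * (X - C (u j)), ?_⟩
    rw [Lagrange.basisDivisor, ← map_sub, ← hw]
    have : algebraMap A K (↑w⁻¹ : A) = (algebraMap A K w)⁻¹ := by
      apply eq_inv_of_mul_eq_one_left
      rw [← map_mul]; simp
    simp [this]

open Polynomial in
theorem WArf.polynomial {A : Type*} [CommRing A] [IsDomain A] (h : WArf A) (hU : UnitDiffs A) :
    WArf A[X] := by
  obtain ⟨u, hu⟩ := hU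
  intro x y z hx hy hz
  let K := FractionRing A
  have hinj := IsFractionRing.injective A K
  have hminj := Polynomial.map_injective _ hinj
  have hx' : x.map (algebraMap A K) ≠ 0 := by
    rwa [Ne, Polynomial.map_eq_zero_iff hinj]
  have hd : x.map (algebraMap A K) ∣ y.map (algebraMap A K) :=
    (hy.map (mapRingHom (algebraMap A K))).dvd hx'
  obtain ⟨q, hq⟩ := hd.mul_right (z.map (algebraMap A K))
  have huinj : Function.Injective u := by
    intro i j hij
    by_contra hne
    exact (hu i j hne).ne_zero (sub_eq_zero.2 hij)
  have hfin : {n | x.eval (u n) = 0}.Finite := by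
    have : (x.rootSet A).Finite := rootSet_finite x A
    refine (this.preimage huinj.injOn).subset fun n hn => ?_
    simp only [Set.mem_preimage, mem_rootSet]
    exact ⟨hx, by simpa using hn⟩
  obtain ⟨s, hs, hcard⟩ := hfin.infinite_compl.exists_subset_card_eq (q.natDegree + 1)
  obtain ⟨r, hr⟩ := lagrange_lift s u hinj hu q (by omega) (by
    intro i hi
    have hne : x.eval (u i) ≠ 0 := hs hi
    obtain ⟨a, ha⟩ := h _ _ _ hne (hy.map (evalRingHom (u i))) (hz.map (evalRingHom (u i)))
    refine ⟨a, ?_⟩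
    have hne' : algebraMap A K (x.eval (u i)) ≠ 0 := by rwa [Ne, map_eq_zero_iff _ hinj]
    apply mul_left_cancel₀ hne'
    have := congrArg (eval (algebraMap A K (u i))) hq
    simp only [eval_mul, eval_map_apply] at this
    rw [← this, ← map_mul, ← map_mul]
    exact congrArg _ ha)
  refine ⟨r, hminj ?_⟩
  rw [Polynomial.map_mul, Polynomial.map_mul, hr, hq]

theorem WArf.mvPolynomial {A : Type*} [CommRing A] [IsDomain A] (h : WArf A) (hU : UnitDiffs A)
    (n : ℕ) : WArf (MvPolynomial (Fin n) A) := by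
  induction n with
  | zero => exact h.equiv (MvPolynomial.isEmptyRingEquiv A (Fin 0)).symm
  | succ n ih =>
    refine (WArf.polynomial ih ?_).equiv (MvPolynomial.finSuccEquiv A n).symm.toRingEquiv
    obtain ⟨u, hu⟩ := hU
    exact ⟨fun i => MvPolynomial.C (u i), fun i j hij => by
      rw [← map_sub]; exact (hu i j hij).map _⟩

theorem WArf.localization {A : Type*} [CommRing A] [IsDomain A] (h : WArf A) (P : Ideal A)
    [P.IsPrime] : WArf (Localization.AtPrime P) := by
  let B := Localization.AtPrime P
  let K := FractionRing A
  let M := P.primeCompl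
  have hM : M ≤ nonZeroDivisors A := P.primeCompl_le_nonZeroDivisors
  let _ : Algebra B K := IsLocalization.localizationAlgebraOfSubmonoidLe B K M _ hM
  have : IsScalarTower A B K :=
    IsLocalization.localization_isScalarTower_of_submonoid_le B K M _ hM
  have : IsFractionRing B K :=
    IsFractionRing.isFractionRing_of_isDomain_of_isLocalization M B K
  have hAK := IsFractionRing.injective A K
  have hBK := IsFractionRing.injective B K
  have hAB : Function.Injective (algebraMap A B) := IsLocalization.injective B hM
  have step : ∀ (x : A) (y : B), x ≠ 0 → IntOver (algebraMap A B x) y →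
      ∃ (t : M) (y' : A), algebraMap A B y' = algebraMap A B t * y ∧ IntOver x y' := by
    intro x y hx hy
    have hxB : algebraMap A B x ≠ 0 := by rwa [Ne, map_eq_zero_iff _ hAB]
    obtain ⟨⟨y0, s⟩, hys⟩ := IsLocalization.surj M y
    simp only at hys
    have h1 := (intOver_iff hBK hxB).1 hy
    obtain ⟨t, ht⟩ := IsIntegral.exists_multiple_integral_of_isLocalization M _ h1
    have e : algebraMap A B ((t : A) * y0) = algebraMap A B ((t * s : M) : A) * y := by
      rw [map_mul, ← hys, Submonoid.coe_mul, map_mul]; ring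
    refine ⟨t * s, t * y0, e, (intOver_iff hAK hx).2 ?_⟩
    have e2 : algebraMap A K ((t : A) * y0) / algebraMap A K x
        = algebraMap A K s * (t • (algebraMap B K y / algebraMap B K (algebraMap A B x))) := by
      rw [Submonoid.smul_def, Algebra.smul_def, IsScalarTower.algebraMap_apply A B K, e,
        map_mul, Submonoid.coe_mul, map_mul, map_mul]
      simp only [← IsScalarTower.algebraMap_apply A B K]
      ring
    rw [e2]
    exact isIntegral_algebraMap.mul ht
  intro x y z hx hy hz
  obtain ⟨⟨x0, s⟩, hxs⟩ := IsLocalization.surj M x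
  simp only at hxs
  have hsu : IsUnit (algebraMap A B s) := IsLocalization.map_units B s
  have hx0 : x0 ≠ 0 := by
    rintro rfl
    rw [map_zero] at hxs
    exact hx ((mul_eq_zero.1 hxs).resolve_right hsu.ne_zero)
  have scale : ∀ w : B, IntOver x w → IntOver (algebraMap A B x0) (algebraMap A B s * w) := by
    intro w hw
    have hxB : algebraMap A B x0 ≠ 0 := by rwa [Ne, map_eq_zero_iff _ hAB]
    rw [intOver_iff hBK hxB]
    have := (intOver_iff hBK hx).1 hw
    convert this using 1
    rw [← hxs, map_mul, map_mul, mul_comm (algebraMap B K x), mul_div_mul_left]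
    rw [Ne, map_eq_zero_iff _ hBK]
    exact hsu.ne_zero
  obtain ⟨t, y', hy', hyi⟩ := step x0 _ hx0 (scale y hy)
  obtain ⟨t', z', hz', hzi⟩ := step x0 _ hx0 (scale z hz)
  have := map_dvd (algebraMap A B) (h x0 y' z' hx0 hyi hzi)
  rw [map_mul, hy', hz', ← hxs] at this
  have ht : IsUnit (algebraMap A B t) := IsLocalization.map_units B t
  have ht' : IsUnit (algebraMap A B t') := IsLocalization.map_units B t'
  have h2 : x ∣ (algebraMap A B t * algebraMap A B s * (algebraMap A B t' * algebraMap A B s))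
      * (y * z) := by
    refine (dvd_mul_right x _).trans (this.trans (dvd_of_eq ?_))
    ring
  exact (((ht.mul hsu).mul (ht'.mul hsu)).dvd_mul_left).1 h2

theorem unitDiffs_of_not_isMaximal {A : Type*} [CommRing A] (P : Ideal A)
    [P.IsPrime] (hP : ¬ P.IsMaximal) : UnitDiffs (Localization.AtPrime P) := by
  have : Infinite (A ⧸ P) := by
    by_contra hfin
    rw [not_infinite_iff_finite] at hfin
    exact hP (Ideal.Quotient.maximal_of_isField _ (Finite.isField_of_domain (A ⧸ P)))
  let e := Infinite.natEmbedding (A ⧸ P)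
  choose v hv using fun n => Ideal.Quotient.mk_surjective (e n)
  refine ⟨fun n => algebraMap A _ (v n), fun i j hij => ?_⟩
  rw [← map_sub]
  refine IsLocalization.map_units (M := P.primeCompl) _ ⟨v i - v j, fun hmem => hij ?_⟩
  apply e.injective
  rw [← hv, ← hv]
  exact Ideal.Quotient.eq.2 hmem

theorem reg_aux {R : Type*} [CommRing R] {I : Ideal R} {b : R} (h : IsSMulRegular (R ⧸ I) b)
    (c : R) (hc : b * c ∈ I) : c ∈ I := by
  rw [← Ideal.Quotient.eq_zero_iff_mem] at hc ⊢
  have h2 : b • (Ideal.Quotient.mk I c) = b • (0 : R ⧸ I) := by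
    rw [smul_zero, ← hc]; rfl
  exact h h2

theorem depth_aux {R σ : Type*} [CommRing R] [IsDomain R] [IsLocalRing R] (hd : RingDepthGE R 2)
    (h w : MvPolynomial σ R) (h0 : h ≠ 0)
    (hm : ∀ x ∈ IsLocalRing.maximalIdeal R, h ∣ MvPolynomial.C x * w) : h ∣ w := by
  obtain ⟨xs, hlen, hmem, hreg⟩ := hd
  match xs, hlen with
  | [a, b], _ =>
    have ha := hm a (hmem a (by simp))
    have hb := hm b (hmem b (by simp))
    have r0 := reg_aux (hreg 0 (by simp)) 1
    have r1 := fun c => reg_aux (hreg 1 (by simp)) c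
    have ha0 : a ≠ 0 := by
      rintro rfl
      simp at r0
    have e1 : {y : R | y ∈ [a, b].take 1} = {a} := by ext; simp
    have r1' : ∀ c, a ∣ b * c → a ∣ c := by
      intro c hc
      have h1 := r1 c
      rw [e1, Ideal.mem_span_singleton, Ideal.mem_span_singleton] at h1
      exact h1 hc
    obtain ⟨d, hd⟩ := ha
    obtain ⟨e, he⟩ := hb
    have hde : MvPolynomial.C b * d = MvPolynomial.C a * e := by
      apply mul_left_cancel₀ h0
      linear_combination MvPolynomial.C a * he - MvPolynomial.C b * hd
    have hadvd : MvPolynomial.C a ∣ d := by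
      rw [MvPolynomial.C_dvd_iff_dvd_coeff]
      intro i
      apply r1'
      rw [← MvPolynomial.coeff_C_mul, hde, MvPolynomial.coeff_C_mul]
      exact dvd_mul_right _ _
    obtain ⟨d', rfl⟩ := hadvd
    refine ⟨d', ?_⟩
    have hCa : (MvPolynomial.C a : MvPolynomial σ R) ≠ 0 := by simpa using ha0
    apply mul_left_cancel₀ hCa
    linear_combination hd

theorem main_two {A : Type*} [CommRing A] [IsDomain A]
    [IsNoetherianRing A] (hS2 : SerreSCondition A 2)
    (hyp : ∀ (M : Ideal A) [M.IsMaximal],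
        (2 : WithBot (WithTop ℕ)) ≤ ringKrullDim (Localization.AtPrime M))
    (hA : WArf A) (n : ℕ) : WArf (MvPolynomial (Fin n) A) := by
  intro h f g h0 hf hg
  by_contra hnd
  have hmk : ∀ w : MvPolynomial (Fin n) A, (Ideal.Quotient.mk (Ideal.span {h}) w = 0) ↔ h ∣ w := fun w => by
    rw [Ideal.Quotient.eq_zero_iff_mem, Ideal.mem_span_singleton]
  have hsm : ∀ (a : A) (w : MvPolynomial (Fin n) A), (a • (Ideal.Quotient.mk (Ideal.span {h}) w) = 0) ↔
      h ∣ MvPolynomial.C a * w := fun a w => by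
    rw [← hmk, MvPolynomial.C_mul']; rfl
  obtain ⟨P, hPa, hle⟩ := exists_le_isAssociatedPrime_of_isNoetherianRing A
    (Ideal.Quotient.mk (Ideal.span {h}) (f * g)) (by rwa [Ne, hmk])
  rw [isAssociatedPrime_iff] at hPa
  obtain ⟨hPp, w, hw⟩ := hPa
  obtain ⟨w, rfl⟩ := Ideal.Quotient.mk_surjective w
  have hwP : ∀ a, a ∈ P ↔ h ∣ MvPolynomial.C a * w := fun a => by
    rw [hw, Submodule.mem_colon_singleton, Submodule.mem_bot, hsm]
  have hfgP : ∀ a, h ∣ MvPolynomial.C a * (f * g) → a ∈ P := fun a ha => by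
    apply hle
    rw [Submodule.mem_colon_singleton, Submodule.mem_bot, hsm]
    exact ha
  let B := Localization.AtPrime P
  let φ : MvPolynomial (Fin n) A →+* MvPolynomial (Fin n) B := MvPolynomial.map (algebraMap A B)
  have hAB : Function.Injective (algebraMap A B) :=
    IsLocalization.injective B P.primeCompl_le_nonZeroDivisors
  have hφ : Function.Injective φ := MvPolynomial.map_injective _ hAB
  have hφ0 : φ h ≠ 0 := by rwa [Ne, map_eq_zero_iff _ hφ]
  have desc : ∀ v : MvPolynomial (Fin n) A, φ h ∣ φ v → ∃ s ∉ P, h ∣ MvPolynomial.C s * v := by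
    rintro v ⟨r, hr⟩
    let _ := MvPolynomial.algebraMvPolynomial (σ := Fin n) (R := A) (S := B)
    obtain ⟨⟨r0, ⟨_, s, hs, rfl⟩⟩, hrs⟩ :=
      IsLocalization.surj (P.primeCompl.map (MvPolynomial.C (σ := Fin n))) r
    refine ⟨s, hs, r0, hφ ?_⟩
    have hrs' : r * φ (MvPolynomial.C s) = φ r0 := hrs
    rw [map_mul, map_mul, hr, ← hrs']
    ring
  have hPm : ¬ P.IsMaximal := by
    intro hmax
    have hd : RingDepthGE B 2 := hS2 P 2 le_rfl (hyp P)
    obtain ⟨s, hs, hsd⟩ := desc w (depth_aux hd (φ h) (φ w) hφ0 (by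
      intro x hx
      obtain ⟨⟨p, s⟩, hps⟩ := IsLocalization.surj P.primeCompl x
      simp only at hps
      have hsu : IsUnit (algebraMap A B s) := IsLocalization.map_units B s
      have hp : p ∈ P := by
        rw [← IsLocalization.AtPrime.to_map_mem_maximal_iff B P p, ← hps]
        exact Ideal.mul_mem_right _ _ hx
      have h1 := map_dvd φ ((hwP p).1 hp)
      have h2 : φ (MvPolynomial.C p) = MvPolynomial.C (algebraMap A B s) * MvPolynomial.C x := by
        rw [← map_mul, mul_comm, hps]
        exact MvPolynomial.map_C _ _
      rw [map_mul, h2, mul_assoc] at h1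
      exact ((hsu.map MvPolynomial.C).dvd_mul_left).1 h1))
    exact hs ((hwP s).2 hsd)
  have hW := (hA.localization P).mvPolynomial (unitDiffs_of_not_isMaximal P hPm) n
  have := hW _ _ _ hφ0 (hf.map φ) (hg.map φ)
  rw [← map_mul] at this
  obtain ⟨s, hs, hsd⟩ := desc _ this
  exact hs (hfgP s hsd)

/-- Let `A` be a Noetherian domain with `(S₂)` which either contains an infinite field
or has `ht M ≥ 2` for every maximal ideal `M`.  Then `A` is weakly Arf iff the
polynomial ring `A[X₁, …, Xₙ]` is weakly Arf for every `n ≥ 1`. -/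
theorem weaklyArf_iff_polynomials (A : Type*) [CommRing A] [IsDomain A]
    [IsNoetherianRing A] (hS2 : SerreSCondition A 2)
    (hyp : (∃ F : Subring A, IsField F ∧ Infinite F) ∨
      (∀ (M : Ideal A) [M.IsMaximal],
        (2 : WithBot (WithTop ℕ)) ≤ ringKrullDim (Localization.AtPrime M))) :
    IsWeaklyArfRing A ↔
      ∀ n : ℕ, 1 ≤ n → IsWeaklyArfRing (MvPolynomial (Fin n) A) := by
  simp only [isWeaklyArfRing_iff]
  constructor
  · intro hA n _
    rcases hyp with ⟨F, hF, hinf⟩ | hyp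
    · refine hA.mvPolynomial ?_ n
      let e := Infinite.natEmbedding F
      refine ⟨fun i => (e i : A), fun i j hij => ?_⟩
      have hne : e i - e j ≠ 0 := sub_ne_zero.2 fun h => hij (e.injective h)
      obtain ⟨b, hb⟩ := hF.mul_inv_cancel hne
      exact IsUnit.of_mul_eq_one (b : A) (congrArg Subtype.val hb)
    · exact main_two hS2 hyp hA n
  · intro h x y z hx hy hz
    have h1 := h 1 le_rfl (MvPolynomial.C x) (MvPolynomial.C y) (MvPolynomial.C z)
      (by simpa using hx) (hy.map _) (hz.map _)
    have := map_dvd (MvPolynomial.eval (fun _ => (0 : A))) h1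
    simpa using this
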